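/- arXiv:1903.10948 — 5 statements merged into one kernel-verified Lean document; each statement's English description precedes it below -/
import Mathlib

section
/- Let Φ be a kinematic-expansive, topologically transitive continuous flow on a compact metric space X. Then Φ has trivial C^0 ℝ-centralizer: for every continuous flow Ψ on X commuting with Φ there exists c ∈ ℝ such that ψ^t = φ^{ct} for all t ∈ ℝ. -/
/-!
The pairs `(s, t)` with `ψ^s = φ^t` form a closed subgroup of the plane. For small `s` the map `ψ^s`
is uniformly close to the identity and commutes with `φ`, so kinematic expansivity at a point `x₀`
with dense orbit gives `ψ^s x₀ = φ^t x₀` for some small `t`, and then `ψ^s = φ^t` on the whole orbit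
of `x₀`, hence everywhere. The closed subgroup is therefore not discrete, so it contains a line
through the origin. If this line is not vertical, its slope is the required constant `c`. If it is
vertical, `φ` is the trivial flow, and then the dense orbit is a single point and so is `X`.
-/

open Filter Function Set
open scoped Topology Uniformity

section ClosedSubgroup

variable {E : Type*} [NormedAddCommGroup E] [NormedSpace ℝ E] {H : AddSubgroup E}

theorem smul_mem_of_mem_tangentConeAt_zero (hH : IsClosed (H : Set E)) {v : E}
    (hv : v ∈ tangentConeAt ℝ (H : Set E) 0) (r : ℝ) : r • v ∈ H := by
  obtain ⟨ι, l, _, c, d, hd, hdH, hcd⟩ := exists_fun_of_mem_tangentConeAt hv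
  have hbdd : l.IsBoundedUnder (· ≤ ·) fun i ↦ ‖Int.fract (r * c i)‖ :=
    isBoundedUnder_of ⟨1, fun i ↦ by
      simpa [abs_of_nonneg] using (Int.fract_lt_one (r * c i)).le⟩
  have hfract : Tendsto (fun i ↦ Int.fract (r * c i) • d i) l (𝓝 0) := hbdd.smul_tendsto_zero hd
  have hfloor : Tendsto (fun i ↦ ⌊r * c i⌋ • d i) l (𝓝 (r • v)) := by
    have := (hcd.const_smul r).sub hfract
    simpa only [smul_smul, ← sub_smul, Int.self_sub_fract, sub_zero, Int.cast_smul_eq_zsmul]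
      using this
  exact hH.mem_of_tendsto hfloor (hdH.mono fun i hi ↦ H.zsmul_mem (by simpa using hi) _)

theorem exists_ne_zero_forall_smul_mem_of_accPt_zero [ProperSpace E] (hH : IsClosed (H : Set E))
    (h0 : AccPt 0 (𝓟 (H : Set E))) : ∃ v ≠ 0, ∀ r : ℝ, r • v ∈ H := by
  obtain ⟨v, hv, hv0⟩ := tangentConeAt_nonempty_of_properSpace (𝕜 := ℝ) h0
  exact ⟨v, hv0, smul_mem_of_mem_tangentConeAt_zero hH hv⟩

end ClosedSubgroup

section Coincidence

variable {σ τ X : Type*} [TopologicalSpace σ] [AddGroup σ] [TopologicalSpace τ] [AddGroup τ]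
  [TopologicalSpace X]

/-- The group of pairs of times at which two flows, possibly with different time groups, are given
by the same map of the phase space. -/
def coincidenceTimes (φ : Flow σ X) (ψ : Flow τ X) : AddSubgroup (σ × τ) where
  carrier := {p | ∀ x, φ p.1 x = ψ p.2 x}
  zero_mem' x := by simp
  add_mem' {p q} hp hq x := by
    simp only [Prod.fst_add, Prod.snd_add, Flow.map_add, hq x, hp (ψ _ x)]
  neg_mem' {p} hp x := (φ.toHomeomorph p.1).injective <| by
    simp only [Flow.toHomeomorph_apply]
    rw [hp (ψ _ x)]
    simp [← Flow.map_add]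

theorem mem_coincidenceTimes {φ : Flow σ X} {ψ : Flow τ X} {p : σ × τ} :
    p ∈ coincidenceTimes φ ψ ↔ ∀ x, φ p.1 x = ψ p.2 x :=
  Iff.rfl

theorem isClosed_coincidenceTimes [T2Space X] (φ : Flow σ X) (ψ : Flow τ X) :
    IsClosed (coincidenceTimes φ ψ : Set (σ × τ)) := by
  have : (coincidenceTimes φ ψ : Set (σ × τ)) = ⋂ x, {p | φ p.1 x = ψ p.2 x} := by
    ext p
    simp [mem_coincidenceTimes]
  rw [this]
  exact isClosed_iInter fun x ↦ isClosed_eq (by fun_prop) (by fun_prop)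

theorem exists_forall_eq_mul_or_forall_eq_self [T2Space X] {φ ψ : Flow ℝ X}
    (h : AccPt 0 (𝓟 (coincidenceTimes ψ φ : Set (ℝ × ℝ)))) :
    (∃ c : ℝ, ∀ t x, ψ t x = φ (c * t) x) ∨ ∀ t x, φ t x = x := by
  obtain ⟨⟨a, b⟩, hne, hline⟩ :=
    exists_ne_zero_forall_smul_mem_of_accPt_zero (isClosed_coincidenceTimes ψ φ) h
  have hab (r : ℝ) (x : X) : ψ (r * a) x = φ (r * b) x := hline r x
  rcases eq_or_ne a 0 with rfl | ha
  · have hb : b ≠ 0 := by simpa using hne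
    exact .inr fun t x ↦ by simpa [hb] using (hab (t / b) x).symm
  · refine .inl ⟨b / a, fun t x ↦ ?_⟩
    rw [div_mul_eq_mul_div, mul_comm, ← div_mul_eq_mul_div, ← hab, div_mul_cancel₀ t ha]

end Coincidence

section DenseOrbit

variable {τ X : Type*} [TopologicalSpace τ] [TopologicalSpace X] {x₀ : X}

theorem eq_flow_of_apply_eq_of_dense_orbit [AddCommMonoid τ] [T2Space X] {φ : Flow τ X}
    (hx₀ : Dense (φ.orbit x₀)) {f : X → X} (hf : Continuous f)
    (hcomm : ∀ t, Function.Commute (φ t) f) {t : τ} (h : f x₀ = φ t x₀) : f = φ t := by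
  refine hf.ext_on hx₀ (by fun_prop) ?_
  rintro _ ⟨s, rfl⟩
  change f (φ s x₀) = φ t (φ s x₀)
  rw [← hcomm s x₀, h, ← Flow.map_add, ← Flow.map_add, add_comm]

theorem subsingleton_of_dense_orbit_of_forall_eq_self [AddMonoid τ] [T1Space X] {φ : Flow τ X}
    (hx₀ : Dense (φ.orbit x₀)) (h : ∀ t x, φ t x = x) : Subsingleton X :=
  subsingleton_of_forall_eq x₀ fun x ↦ by
    simpa [Flow.orbit_eq_range, h] using hx₀.closure_eq.ge (mem_univ x)

end DenseOrbit

theorem tendstoUniformly_flow_nhds_zero {τ X : Type*} [TopologicalSpace τ] [AddZero τ]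
    [UniformSpace X] [CompactSpace X] (ψ : Flow τ X) : TendstoUniformly ψ id (𝓝 0) := by
  let Ψ : C(τ, C(X, X)) := ContinuousMap.curry ⟨uncurry ψ, ψ.cont'⟩
  rw [← ψ.map_zero]
  exact ContinuousMap.tendsto_iff_tendstoUniformly.1 (Ψ.continuous.tendsto 0)

section KinematicExpansive

variable {X : Type*}

/-- Kinematic expansivity of a real flow at a single point `x`: orbits that stay close to the orbit
of `x` are those of small time shifts of `x`. Entourages play the role of the separation constants,
and they may depend on `x`. -/
def IsKinematicExpansiveAt [UniformSpace X] (φ : Flow ℝ X) (x : X) : Prop :=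
  ∀ ε > 0, ∃ V ∈ 𝓤 X, ∀ y, (∀ t, (φ t x, φ t y) ∈ V) → ∃ t, |t| < ε ∧ y = φ t x

theorem isKinematicExpansiveAt_iff_dist [PseudoMetricSpace X] {φ : Flow ℝ X} {x : X} :
    IsKinematicExpansiveAt φ x ↔ ∀ ε > 0, ∃ δ > 0, ∀ y,
      (∀ t, dist (φ t x) (φ t y) < δ) → ∃ t, |t| < ε ∧ y = φ t x := by
  refine forall₂_congr fun ε _ ↦ Metric.uniformity_basis_dist.exists_iff ?_
  exact fun V W hVW hW y hy ↦ hW y fun t ↦ hVW (hy t)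

variable [UniformSpace X] [T2Space X] {φ ψ : Flow ℝ X} {x₀ : X}

theorem IsKinematicExpansiveAt.exists_entourage_forall_commute_exists_eq
    (hφ : IsKinematicExpansiveAt φ x₀) (hx₀ : Dense (φ.orbit x₀)) {ε : ℝ} (hε : 0 < ε) :
    ∃ V ∈ 𝓤 X, ∀ f : X → X, Continuous f → (∀ t, Function.Commute (φ t) f) →
      (∀ x, (x, f x) ∈ V) → ∃ t, |t| < ε ∧ f = φ t := by
  obtain ⟨V, hV, hsep⟩ := hφ ε hε
  refine ⟨V, hV, fun f hf hcomm hfV ↦ ?_⟩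
  obtain ⟨t, ht, hft⟩ := hsep (f x₀) fun t ↦ (hcomm t x₀).symm ▸ hfV (φ t x₀)
  exact ⟨t, ht, eq_flow_of_apply_eq_of_dense_orbit hx₀ hf hcomm hft⟩

theorem IsKinematicExpansiveAt.accPt_coincidenceTimes (hφ : IsKinematicExpansiveAt φ x₀)
    (hx₀ : Dense (φ.orbit x₀)) (hψ : TendstoUniformly ψ id (𝓝 0))
    (hcomm : ∀ s t, Function.Commute (φ t) (ψ s)) :
    AccPt 0 (𝓟 (coincidenceTimes ψ φ : Set (ℝ × ℝ))) := by
  rw [accPt_iff_frequently, Metric.nhds_basis_ball.frequently_iff]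
  intro ε hε
  obtain ⟨V, hV, hsmall⟩ := hφ.exists_entourage_forall_commute_exists_eq hx₀ hε
  have hnear : ∀ᶠ s in 𝓝[≠] 0, s ∈ Metric.ball 0 ε ∧ ∀ x, (x, ψ s x) ∈ V :=
    eventually_nhdsWithin_of_eventually_nhds <| .and (Metric.ball_mem_nhds 0 hε) (hψ V hV)
  obtain ⟨s, ⟨hsε, hsV⟩, hs0⟩ := (hnear.and eventually_mem_nhdsWithin).exists
  obtain ⟨t, htε, hst⟩ := hsmall (ψ s) (by fun_prop) (hcomm s) hsV
  refine ⟨(s, t), ?_, mt (congrArg Prod.fst) hs0, congrFun hst⟩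
  rw [← Prod.mk_zero_zero, ← ball_prod_same]
  exact ⟨hsε, mem_ball_zero_iff.2 htε⟩

end KinematicExpansive

theorem transitive_kinematic_expansive_trivial_R_centralizer_general
    {X : Type*} [UniformSpace X] [T2Space X] {φ ψ : Flow ℝ X} {x₀ : X}
    (hφ : IsKinematicExpansiveAt φ x₀) (hx₀ : Dense (φ.orbit x₀))
    (hψ : TendstoUniformly ψ id (𝓝 0)) (hcomm : ∀ s t, Function.Commute (φ t) (ψ s)) :
    ∃ c : ℝ, ∀ t x, ψ t x = φ (c * t) x := by
  rcases exists_forall_eq_mul_or_forall_eq_self (hφ.accPt_coincidenceTimes hx₀ hψ hcomm)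
    with hc | htrivial
  · exact hc
  · have := subsingleton_of_dense_orbit_of_forall_eq_self hx₀ htrivial
    exact ⟨0, fun _ _ ↦ Subsingleton.elim _ _⟩

/-- A kinematic-expansive, topologically transitive continuous flow on a compact
metric space has trivial `C⁰` ℝ-centralizer: any commuting continuous flow is a
constant-time reparameterization. -/
theorem transitive_kinematic_expansive_trivial_R_centralizer
    {X : Type*} [MetricSpace X] [CompactSpace X]
    (φ ψ : ℝ → X → X)
    (hφc : Continuous fun p : ℝ × X => φ p.1 p.2)
    (hφ0 : ∀ x, φ 0 x = x)
    (hφadd : ∀ s t : ℝ, ∀ x, φ (s + t) x = φ s (φ t x))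
    (hke : ∀ ε : ℝ, 0 < ε → ∃ δ : ℝ, 0 < δ ∧ ∀ x y : X,
      (∀ t : ℝ, dist (φ t x) (φ t y) < δ) → ∃ t : ℝ, |t| < ε ∧ y = φ t x)
    (htrans : ∃ x : X, Dense {y : X | ∃ t : ℝ, 0 ≤ t ∧ y = φ t x})
    (hψc : Continuous fun p : ℝ × X => ψ p.1 p.2)
    (hψ0 : ∀ x, ψ 0 x = x)
    (hψadd : ∀ s t : ℝ, ∀ x, ψ (s + t) x = ψ s (ψ t x))
    (hcomm : ∀ s t : ℝ, ∀ x, φ t (ψ s x) = ψ s (φ t x)) :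
    ∃ c : ℝ, ∀ t : ℝ, ∀ x, ψ t x = φ (c * t) x := by
  let Φ : Flow ℝ X := ⟨φ, hφc, hφadd, hφ0⟩
  let Ψ : Flow ℝ X := ⟨ψ, hψc, hψadd, hψ0⟩
  obtain ⟨x₀, hx₀⟩ := htrans
  have hΦ : IsKinematicExpansiveAt Φ x₀ := isKinematicExpansiveAt_iff_dist.2 fun ε hε ↦
    (hke ε hε).imp fun _ hδ ↦ hδ.imp_right fun hsep ↦ hsep x₀
  have horbit : Dense (Φ.orbit x₀) := hx₀.mono <| by
    rintro _ ⟨t, -, rfl⟩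
    exact Φ.mem_orbit x₀ t
  exact transitive_kinematic_expansive_trivial_R_centralizer_general hΦ horbit
    (tendstoUniformly_flow_nhds_zero Ψ) hcomm
end

section
/- If Φ is a separating continuous flow on a compact metric space X, then Φ does not have arbitrarily small positive periods: there exists η > 0 such that whenever φ^p(x) = x for some x ∈ X and some p with 0 < p < η, the point x is a fixed point of Φ. -/
/-!
A point `x` of small positive period `p` has orbit `{Φ t x | 0 ≤ t ≤ p}`, so by continuity at time
`0` it never strays far from its starting point. Near a point that is not fixed no orbit can stay
that close, and near a fixed point `a` of a separating flow such an orbit must contain `a`, hence be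
`{a}`. So each point has a neighbourhood in which all points of sufficiently small period are fixed,
and compactness makes the bound on the period uniform.
-/

open Filter Function Set Topology

section Basic

variable {τ X : Type*} [TopologicalSpace τ] [TopologicalSpace X]

/-- `x` is a fixed point of the flow `Φ`, that is, of all its time maps simultaneously. -/
def IsFlowFixedPt [AddZero τ] (Φ : Flow τ X) (x : X) : Prop :=
  ∀ t, IsFixedPt (Φ t) x

theorem IsFlowFixedPt.of_flow [AddGroup τ] {Φ : Flow τ X} {x : X} {t : τ}
    (h : IsFlowFixedPt Φ (Φ t x)) : IsFlowFixedPt Φ x := by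
  have hx : x = Φ t x := calc
    x = Φ (-t) (Φ t x) := by rw [← Φ.map_add, neg_add_cancel, Φ.map_zero_apply]
    _ = Φ t x := h (-t)
  rwa [hx]

theorem exists_nhds_forall_not_orbit_subset [AddMonoid τ] [T2Space X] (Φ : Flow τ X) {a : X}
    (ha : ¬IsFlowFixedPt Φ a) : ∃ U ∈ 𝓝 a, ∀ x, ¬Φ.orbit x ⊆ U := by
  obtain ⟨t, ht⟩ := not_forall.1 ha
  obtain ⟨V, W, hV, hW, hVW⟩ := t2_separation_nhds ht
  refine ⟨W ∩ Φ t ⁻¹' V,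
    inter_mem hW ((Φ.continuous_toFun t).continuousAt.preimage_mem_nhds hV), fun x hx => ?_⟩
  exact hVW.notMem_of_mem_left (hx (Φ.mem_orbit_self x)).2 (hx (Φ.mem_orbit x t)).1

end Basic

section SmallPeriods

variable {τ X : Type*} [TopologicalSpace τ] [TopologicalSpace X] [AddCommGroup τ] [LinearOrder τ]
  [IsOrderedAddMonoid τ] [Archimedean τ]

theorem orbit_eq_image_Icc_of_isFixedPt (Φ : Flow τ X) {x : X} {p : τ} (hp : 0 < p)
    (hx : IsFixedPt (Φ p) x) : Φ.orbit x = (fun t => Φ t x) '' Icc 0 p := by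
  have hper : Periodic (fun t => Φ t x) p := fun t => by
    simp only [Φ.map_add, hx.eq]
  rw [Φ.orbit_eq_range, ← hper.image_Icc hp 0, zero_add]

variable [OrderTopology τ]

theorem eventually_orbit_subset_of_isFixedPt (Φ : Flow τ X) {a : X} {U : Set X} (hU : U ∈ 𝓝 a) :
    ∀ᶠ z : τ × X in 𝓝 (0, a), 0 < z.1 → IsFixedPt (Φ z.1) z.2 → Φ.orbit z.2 ⊆ U := by
  have hΦ : Tendsto (uncurry Φ) (𝓝 0 ×ˢ 𝓝 a) (𝓝 a) := by
    simpa only [nhds_prod_eq, uncurry_apply_pair, Φ.map_zero_apply] using Φ.cont'.tendsto (0, a)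
  obtain ⟨I, hI, V, hV, hIV⟩ := mem_prod_iff.1 (hΦ hU)
  have hIcc : ∀ᶠ p in 𝓝 (0 : τ), Icc 0 p ⊆ I :=
    (tendsto_const_nhds.Icc tendsto_id).eventually (eventually_smallSets_subset.2 hI)
  rw [nhds_prod_eq]
  filter_upwards [hIcc.prod_mk hV]
  rintro ⟨p, x⟩ ⟨hpI, hxV⟩ hp hx
  rw [orbit_eq_image_Icc_of_isFixedPt Φ hp hx]
  exact image_subset_iff.2 fun s hs => hIV (mk_mem_prod (hpI hs) hxV)

theorem separating_flow_no_small_periods_general [T2Space X] (Φ : Flow τ X) {K : Set X}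
    (hK : IsCompact K)
    (hΦ : ∀ a ∈ K, IsFlowFixedPt Φ a →
      ∃ U ∈ 𝓝 a, ∀ x, Φ.orbit x ⊆ U → IsFlowFixedPt Φ x) :
    ∀ᶠ p in 𝓝[>] 0, ∀ x ∈ K, IsFixedPt (Φ p) x → IsFlowFixedPt Φ x := by
  have hloc : ∀ a ∈ K, ∃ U ∈ 𝓝 a, ∀ x, Φ.orbit x ⊆ U → IsFlowFixedPt Φ x := by
    intro a haK
    by_cases ha : IsFlowFixedPt Φ a
    · exact hΦ a haK ha
    · obtain ⟨U, hU, hnot⟩ := exists_nhds_forall_not_orbit_subset Φ ha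
      exact ⟨U, hU, fun x hx => absurd hx (hnot x)⟩
  have hunif : ∀ᶠ p in 𝓝 (0 : τ), ∀ x ∈ K, 0 < p → IsFixedPt (Φ p) x → IsFlowFixedPt Φ x := by
    refine hK.eventually_forall_of_forall_eventually fun a haK => ?_
    obtain ⟨U, hU, hfix⟩ := hloc a haK
    filter_upwards [eventually_orbit_subset_of_isFixedPt Φ hU] with z hz hpos hper
    exact hfix z.2 (hz hpos hper)
  filter_upwards [eventually_nhdsWithin_of_eventually_nhds hunif, self_mem_nhdsWithin]
    with p hp hpos x hxK using hp x hxK hpos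

end SmallPeriods

/-- A flow is separating if, for some scale `δ`, two points whose trajectories stay `δ`-close at all
times lie on the same orbit. -/
def IsSeparatingFlow {τ X : Type*} [TopologicalSpace τ] [AddZero τ] [PseudoMetricSpace X]
    (Φ : Flow τ X) : Prop :=
  ∃ δ : ℝ, 0 < δ ∧ ∀ x y : X, (∀ t, dist (Φ t x) (Φ t y) < δ) → ∃ t, y = Φ t x

theorem IsSeparatingFlow.exists_nhds_forall_isFlowFixedPt {τ X : Type*} [TopologicalSpace τ]
    [AddGroup τ] [PseudoMetricSpace X] {Φ : Flow τ X} (hΦ : IsSeparatingFlow Φ) {a : X}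
    (ha : IsFlowFixedPt Φ a) : ∃ U ∈ 𝓝 a, ∀ x, Φ.orbit x ⊆ U → IsFlowFixedPt Φ x := by
  obtain ⟨δ, hδ, hsep⟩ := hΦ
  refine ⟨Metric.ball a δ, Metric.ball_mem_nhds a hδ, fun x hx => ?_⟩
  have hclose : ∀ t, dist (Φ t x) (Φ t a) < δ := fun t => by
    rw [(ha t).eq]
    exact hx (Φ.mem_orbit x t)
  obtain ⟨t, ht⟩ := hsep x a hclose
  exact IsFlowFixedPt.of_flow (ht ▸ ha)

/-- A separating continuous flow on a compact metric space does not have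
arbitrarily small positive periods: any point of sufficiently small positive
period is a fixed point. -/
theorem separating_flow_no_small_periods
    {X : Type*} [MetricSpace X] [CompactSpace X]
    (φ : ℝ → X → X)
    (hφc : Continuous fun p : ℝ × X => φ p.1 p.2)
    (hφ0 : ∀ x, φ 0 x = x)
    (hφadd : ∀ s t : ℝ, ∀ x, φ (s + t) x = φ s (φ t x))
    (hsep : ∃ δ : ℝ, 0 < δ ∧ ∀ x y : X,
      (∀ t : ℝ, dist (φ t x) (φ t y) < δ) → ∃ t : ℝ, y = φ t x) :
    ∃ η : ℝ, 0 < η ∧ ∀ (x : X) (p : ℝ), 0 < p → p < η → φ p x = x →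
      ∀ t : ℝ, φ t x = x := by
  let Φ : Flow ℝ X := ⟨φ, hφc, hφadd, hφ0⟩
  have hΦ : IsSeparatingFlow Φ := hsep
  obtain ⟨η, hη, hfix⟩ := mem_nhdsGT_iff_exists_Ioo_subset.1 <|
    separating_flow_no_small_periods_general Φ isCompact_univ
      fun _ _ => hΦ.exists_nhds_forall_isFlowFixedPt
  exact ⟨η, hη, fun x p hp hpη => hfix ⟨hp, hpη⟩ x (mem_univ x)⟩
end

section
/- Let Φ and Ψ be continuous flows on a compact metric space X such that {ψ^t : t ∈ ℝ} = {φ^s : s ∈ ℝ} as sets of maps, and suppose that for every ε > 0 there exists δ > 0 such that d_{C^0}(φ^t, Id) < δ implies |t| < ε. Then there exists c ∈ ℝ such that ψ^t = φ^{ct} for all t ∈ ℝ. -/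
/-!
The smallness hypothesis makes `t ↦ φ t` injective, so each `ψ t` equals `φ (a t)` for a unique
time `a t`, and the group laws force `a` to be additive. Compactness of `X` makes the convergence
`ψ t → id` as `t → 0` uniform, so the smallness hypothesis also gives `a t → 0`. Thus `a` is a
continuous additive map, and on `ℝ` such a map is multiplication by `a 1`.
-/

open Filter Function Set Topology Uniformity

/-- A family of self-maps of a uniform space *detects small times* if its parameter is close to `0`
whenever the corresponding map is uniformly close to the identity. Entourages encode uniform
closeness, so that no metric is needed. -/
def DetectsSmallTimes {G X : Type*} [Zero G] [TopologicalSpace G] [UniformSpace X]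
    (φ : G → X → X) : Prop :=
  ∀ U ∈ 𝓝 (0 : G), ∃ V ∈ 𝓤 X, ∀ t, (∀ x, (x, φ t x) ∈ V) → t ∈ U

theorem detectsSmallTimes_iff_dist {G X : Type*} [SeminormedAddGroup G] [PseudoMetricSpace X]
    {φ : G → X → X} :
    DetectsSmallTimes φ ↔
      ∀ ε : ℝ, 0 < ε → ∃ δ : ℝ, 0 < δ ∧ ∀ t, (∀ x, dist (φ t x) x < δ) → ‖t‖ < ε := by
  constructor
  · intro h ε hε
    obtain ⟨V, hV, hVε⟩ := h _ (Metric.ball_mem_nhds 0 hε)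
    obtain ⟨δ, hδ, hδV⟩ := Metric.mem_uniformity_dist.mp hV
    refine ⟨δ, hδ, fun t ht ↦ mem_ball_zero_iff.mp (hVε t fun x ↦ hδV ?_)⟩
    rw [dist_comm]
    exact ht x
  · intro h U hU
    obtain ⟨ε, hε, hεU⟩ := Metric.mem_nhds_iff.mp hU
    obtain ⟨δ, hδ, hδε⟩ := h ε hε
    refine ⟨_, Metric.dist_mem_uniformity hδ, fun t ht ↦
      hεU (mem_ball_zero_iff.mpr (hδε t fun x ↦ ?_))⟩
    rw [dist_comm]
    exact ht x

namespace DetectsSmallTimes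

variable {G X : Type*} [TopologicalSpace G] [UniformSpace X] {φ : G → X → X}

theorem eq_zero_of_forall_eq [Zero G] [T1Space G] (hφ : DetectsSmallTimes φ) {t : G}
    (ht : ∀ x, φ t x = x) : t = 0 := by
  by_contra hne
  obtain ⟨V, hV, hVt⟩ := hφ {t}ᶜ (isOpen_compl_singleton.mem_nhds (Ne.symm hne))
  refine hVt t (fun x ↦ ?_) rfl
  rw [ht]
  exact refl_mem_uniformity hV

theorem injective [AddGroup G] [T1Space G] (hφ : DetectsSmallTimes φ) (hφ0 : ∀ x, φ 0 x = x)
    (hφadd : ∀ s t x, φ (s + t) x = φ s (φ t x)) : Injective φ := by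
  intro s t hst
  refine neg_add_eq_zero.mp (hφ.eq_zero_of_forall_eq fun x ↦ ?_)
  rw [hφadd, ← hst, ← hφadd, neg_add_cancel, hφ0]

theorem tendsto_zero [Zero G] (hφ : DetectsSmallTimes φ) {ι : Type*} {l : Filter ι} {a : ι → G}
    (ha : TendstoUniformly (fun i ↦ φ (a i)) id l) : Tendsto a l (𝓝 0) := by
  intro U hU
  obtain ⟨V, hV, hVU⟩ := hφ U hU
  exact (ha V hV).mono fun i hi ↦ hVU (a i) hi

end DetectsSmallTimes

theorem exists_addMonoidHom_forall_eq_of_range_subset {G H X : Type*} [AddGroup G] [AddZeroClass H]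
    {φ : G → X → X} {ψ : H → X → X} (hφ : Injective φ)
    (hφadd : ∀ s t x, φ (s + t) x = φ s (φ t x)) (hψadd : ∀ s t x, ψ (s + t) x = ψ s (ψ t x))
    (hrange : range ψ ⊆ range φ) : ∃ a : H →+ G, ∀ t, φ (a t) = ψ t := by
  choose a ha using range_subset_iff.mp hrange
  refine ⟨AddMonoidHom.mk' a fun s t ↦ hφ (funext fun x ↦ ?_), ha⟩
  rw [ha, hψadd, hφadd, ha, ha]

theorem DetectsSmallTimes.exists_continuousAddMonoidHom {G H X : Type*}
    [AddGroup G] [TopologicalSpace G] [ContinuousAdd G] [T1Space G]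
    [AddGroup H] [TopologicalSpace H] [IsTopologicalAddGroup H] [UniformSpace X]
    {φ : G → X → X} {ψ : H → X → X} (hφ : DetectsSmallTimes φ)
    (hφ0 : ∀ x, φ 0 x = x) (hφadd : ∀ s t x, φ (s + t) x = φ s (φ t x))
    (hψadd : ∀ s t x, ψ (s + t) x = ψ s (ψ t x)) (hψ : TendstoUniformly ψ id (𝓝 0))
    (hrange : range ψ ⊆ range φ) : ∃ a : H →ₜ+ G, ∀ t, φ (a t) = ψ t := by
  obtain ⟨a, ha⟩ := exists_addMonoidHom_forall_eq_of_range_subset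
    (hφ.injective hφ0 hφadd) hφadd hψadd hrange
  have ha_zero : Tendsto a (𝓝 0) (𝓝 0) := hφ.tendsto_zero (by simpa only [ha] using hψ)
  exact ⟨⟨a, continuous_of_tendsto_nhds_zero a ha_zero⟩, ha⟩

theorem flows_equal_as_sets_are_linear_time_changes_general {X : Type*} [UniformSpace X]
    {φ ψ : ℝ → X → X} (hφ0 : ∀ x, φ 0 x = x) (hφadd : ∀ s t x, φ (s + t) x = φ s (φ t x))
    (hψadd : ∀ s t x, ψ (s + t) x = ψ s (ψ t x)) (hψ : TendstoUniformly ψ id (𝓝 0))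
    (hrange : range ψ ⊆ range φ) (hφ : DetectsSmallTimes φ) :
    ∃ c : ℝ, ∀ t x, ψ t x = φ (c * t) x := by
  obtain ⟨a, ha⟩ := hφ.exists_continuousAddMonoidHom hφ0 hφadd hψadd hψ hrange
  have ha_linear (t : ℝ) : a t = a 1 * t := by
    simpa [mul_comm] using map_real_smul a (map_continuous a) t 1
  exact ⟨a 1, fun t x ↦ by rw [← ha_linear, ha]⟩

/-- If two continuous flows on a compact metric space consist of the same set of
maps, and time-`t` maps of `φ` that are uniformly close to the identity have
small `t`, then the flows agree up to a constant linear time change. -/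
theorem flows_equal_as_sets_are_linear_time_changes
    {X : Type*} [MetricSpace X] [CompactSpace X]
    (φ ψ : ℝ → X → X)
    (hφc : Continuous fun p : ℝ × X => φ p.1 p.2)
    (hφ0 : ∀ x, φ 0 x = x)
    (hφadd : ∀ s t : ℝ, ∀ x, φ (s + t) x = φ s (φ t x))
    (hψc : Continuous fun p : ℝ × X => ψ p.1 p.2)
    (hψ0 : ∀ x, ψ 0 x = x)
    (hψadd : ∀ s t : ℝ, ∀ x, ψ (s + t) x = ψ s (ψ t x))
    (hrange : Set.range ψ = Set.range φ)
    (hsmall : ∀ ε : ℝ, 0 < ε → ∃ δ : ℝ, 0 < δ ∧ ∀ t : ℝ,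
      (∀ x, dist (φ t x) x < δ) → |t| < ε) :
    ∃ c : ℝ, ∀ t : ℝ, ∀ x, ψ t x = φ (c * t) x := by
  have hψ : TendstoUniformly ψ id (𝓝 0) := (funext hψ0 : ψ 0 = id) ▸ hψc.tendstoUniformly ψ 0
  exact flows_equal_as_sets_are_linear_time_changes_general hφ0 hφadd hψadd hψ hrange.subset
    (detectsSmallTimes_iff_dist.mpr hsmall)
end

section
/- Let Φ be a topologically transitive, kinematic-expansive continuous flow on a compact metric space X, let ε > 0 and let δ > 0 be a separation constant for ε. If f : X → X is a homeomorphism commuting with Φ and d_{C^0}(f, Id) < δ, then f = φ^τ for some τ ∈ ℝ with |τ| < ε. -/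
/-!
Since `f` commutes with the flow, the orbits of `f x` and `x` stay as close as `f` is to the
identity, so separation puts `f x = φ τ x` on the orbit of `x`, with `τ` depending on `x`. For a
point `x` with dense orbit this single equality suffices: `f` and `φ τ` both commute with the flow,
hence agree along the whole orbit of `x`, and by continuity everywhere.
-/

theorem eq_of_semiconj_of_denseRange_orbit {T X Y : Type*} [TopologicalSpace X]
    [TopologicalSpace Y] [T2Space Y] {φ : T → X → X} {ψ : T → Y → Y} {f g : X → Y}
    (hf : Continuous f) (hg : Continuous g)
    (hfφ : ∀ t, Function.Semiconj f (φ t) (ψ t)) (hgφ : ∀ t, Function.Semiconj g (φ t) (ψ t))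
    {x : X} (hx : DenseRange fun t => φ t x) (hfg : f x = g x) : f = g := by
  refine hx.equalizer hf hg (funext fun t => ?_)
  calc
    f (φ t x) = ψ t (f x) := hfφ t x
    _ = ψ t (g x) := by rw [hfg]
    _ = g (φ t x) := (hgφ t x).symm

theorem commute_of_apply_add {T X : Type*} [AddCommMagma T] {φ : T → X → X}
    (hφ : ∀ s t x, φ (s + t) x = φ s (φ t x)) (s t : T) : Function.Commute (φ s) (φ t) :=
  fun x => by rw [← hφ, add_comm, hφ]

/-- `δ` is a separation constant for the set `U` of times: points whose orbits under `φ` stay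
`δ`-close at all times differ by a time in `U`. A separation constant for `ε` in the sense of
kinematic expansiveness is the case of a flow with `U = {t | |t| < ε}`. -/
def IsSeparationConstant {T X : Type*} [PseudoMetricSpace X] (φ : T → X → X) (U : Set T) (δ : ℝ) :
    Prop :=
  ∀ x y : X, (∀ t, dist (φ t x) (φ t y) < δ) → ∃ t ∈ U, y = φ t x

theorem IsSeparationConstant.exists_mem_apply_eq {T X : Type*} [PseudoMetricSpace X]
    {φ : T → X → X} {U : Set T} {δ : ℝ} (hδ : IsSeparationConstant φ U δ) {f : X → X}
    (hfφ : ∀ t, Function.Commute f (φ t)) (hclose : ∀ x, dist (f x) x < δ) (x : X) :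
    ∃ τ ∈ U, f x = φ τ x :=
  hδ x (f x) fun t =>
    calc
      dist (φ t x) (φ t (f x)) = dist (f (φ t x)) (φ t x) := by rw [← hfφ t x, dist_comm]
      _ < δ := hclose (φ t x)

theorem transitive_kinematic_expansive_discrete_centralizer_general {T X : Type*} [MetricSpace X]
    {φ : T → X → X} (hφ : ∀ t, Continuous (φ t)) (hφcomm : ∀ s t, Function.Commute (φ s) (φ t))
    {x : X} (hx : DenseRange fun t => φ t x)
    {U : Set T} {δ : ℝ} (hδ : IsSeparationConstant φ U δ)
    {f : X → X} (hf : Continuous f) (hfφ : ∀ t, Function.Commute f (φ t))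
    (hclose : ∀ y, dist (f y) y < δ) :
    ∃ τ ∈ U, f = φ τ := by
  obtain ⟨τ, hτ, hfx⟩ := hδ.exists_mem_apply_eq hfφ hclose x
  exact ⟨τ, hτ, eq_of_semiconj_of_denseRange_orbit hf (hφ τ) hfφ (hφcomm τ) hx hfx⟩

/-- Discrete centralizer: a homeomorphism commuting with a topologically
transitive kinematic-expansive flow that is within a separation constant of the
identity is a time-`τ` map of the flow, with `|τ| < ε`. -/
theorem transitive_kinematic_expansive_discrete_centralizer
    {X : Type*} [MetricSpace X] [CompactSpace X]
    (φ : ℝ → X → X)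
    (hφc : Continuous fun p : ℝ × X => φ p.1 p.2)
    (hφ0 : ∀ x, φ 0 x = x)
    (hφadd : ∀ s t : ℝ, ∀ x, φ (s + t) x = φ s (φ t x))
    (hke : ∀ ε' : ℝ, 0 < ε' → ∃ δ' : ℝ, 0 < δ' ∧ ∀ x y : X,
      (∀ t : ℝ, dist (φ t x) (φ t y) < δ') → ∃ t : ℝ, |t| < ε' ∧ y = φ t x)
    (htrans : ∃ x : X, Dense {y : X | ∃ t : ℝ, 0 ≤ t ∧ y = φ t x})
    (ε δ : ℝ) (hε : 0 < ε) (hδ : 0 < δ)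
    (hsep : ∀ x y : X, (∀ t : ℝ, dist (φ t x) (φ t y) < δ) →
      ∃ t : ℝ, |t| < ε ∧ y = φ t x)
    (f : X ≃ₜ X)
    (hcomm : ∀ t : ℝ, ∀ x, f (φ t x) = φ t (f x))
    (hclose : ∀ x, dist (f x) x < δ) :
    ∃ τ : ℝ, |τ| < ε ∧ ∀ x, f x = φ τ x := by
  obtain ⟨x, hx⟩ := htrans
  have hx_orbit : DenseRange fun t => φ t x :=
    hx.mono (by rintro _ ⟨t, -, rfl⟩; exact ⟨t, rfl⟩)
  obtain ⟨τ, hτ, hf⟩ := transitive_kinematic_expansive_discrete_centralizer_general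
    (fun t => hφc.comp (.prodMk_right t)) (commute_of_apply_add hφadd) hx_orbit
    (U := {t | |t| < ε}) hsep f.continuous hcomm hclose
  exact ⟨τ, hτ, congrFun hf⟩
end

section
/- Let Φ be a continuous flow on a compact connected metric space X with at most countably many chain-components, each of which is topologically transitive (contains a point whose forward Φ-semiorbit is dense in that chain-component). Then every continuous Φ-invariant function h : X → ℝ is constant. -/
/-!
Every `ω`-limit point of `x` is chain recurrent, because an orbit segment joining two of its visits
near that point can be closed up to a periodic `ε`-chain. So an invariant function takes each of its
values on some chain-component. It is constant on the closure of an orbit, hence has only countably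
many values, and a connected countable subset of a metric space is a point.
-/

/-- A periodic ε-chain for the flow `φ`. -/
def IsPeriodicChain {X : Type*} [MetricSpace X] (φ : ℝ → X → X) (ε : ℝ)
    (g : ℝ → X) : Prop :=
  (∃ P : ℝ, 0 < P ∧ ∀ t : ℝ, g (t + P) = g t) ∧
  ∀ t τ : ℝ, |τ| < 1 → dist (g (t + τ)) (φ τ (g t)) < ε

/-- A point is chain recurrent if it lies on periodic ε-chains for every ε > 0. -/
def ChainRecurrentPt {X : Type*} [MetricSpace X] (φ : ℝ → X → X) (x : X) : Prop :=
  ∀ ε : ℝ, 0 < ε → ∃ g : ℝ → X, IsPeriodicChain φ ε g ∧ g 0 = x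

/-- Two chain-recurrent points are chain-equivalent if for every ε > 0 some
periodic ε-chain passes through both. -/
def ChainEquivPt {X : Type*} [MetricSpace X] (φ : ℝ → X → X) (x y : X) : Prop :=
  ChainRecurrentPt φ x ∧ ChainRecurrentPt φ y ∧
  ∀ ε : ℝ, 0 < ε → ∃ g : ℝ → X, IsPeriodicChain φ ε g ∧
    (∃ a : ℝ, g a = x) ∧ (∃ b : ℝ, g b = y)

/-- The chain-components of a flow: the chain-equivalence classes. -/
def ChainComponents {X : Type*} [MetricSpace X] (φ : ℝ → X → X) : Set (Set X) :=
  {C | ∃ x : X, ChainRecurrentPt φ x ∧ C = {y | ChainEquivPt φ x y}}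

open Filter Set Topology omegaLimit

lemma uniformEquicontinuous_of_isCompact {T X Y : Type*} [TopologicalSpace T] [UniformSpace X]
    [CompactSpace X] [UniformSpace Y] {f : T → X → Y} (hf : Continuous f.uncurry) {K : Set T}
    (hK : IsCompact K) : UniformEquicontinuous fun t : K => f t := by
  refine CompactSpace.uniformEquicontinuous_of_equicontinuous fun x u hu => ?_
  have hswap : ContinuousOn (fun x t => f t x).uncurry (univ ×ˢ K) :=
    (hf.comp continuous_swap).continuousOn
  obtain ⟨v, hv, hvu⟩ := hK.mem_uniformity_of_prod hswap (mem_univ x) (symm_le_uniformity hu)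
  rw [nhdsWithin_univ] at hv
  filter_upwards [hv] with x' hx' t using hvu x' hx' t t.2

section Orbit

variable {τ X : Type*} [TopologicalSpace τ] [AddMonoid τ] [TopologicalSpace X] (Φ : Flow τ X)

lemma omegaLimit_singleton_subset_closure_orbit (f : Filter τ) (x : X) :
    ω f Φ {x} ⊆ closure (Φ.orbit x) := by
  simpa only [image2_singleton_right, image_univ, Flow.orbit_eq_range] using
    omegaLimit_subset_closure_image2 f Φ {x} univ_mem

variable {Φ} in
lemma eq_of_mem_closure_orbit {Y : Type*} [TopologicalSpace Y] [T2Space Y] {h : X → Y}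
    (hh : Continuous h) (hinv : ∀ t x, h (Φ t x) = h x) {x y : X}
    (hy : y ∈ closure (Φ.orbit x)) : h y = h x := by
  have horbit : Φ.orbit x ⊆ {z | h z = h x} := by
    rintro _ ⟨t, rfl⟩
    exact hinv t x
  exact closure_minimal horbit (isClosed_eq hh continuous_const) hy

end Orbit

section Chain

variable {X : Type*} [MetricSpace X] {φ : ℝ → X → X} {ε : ℝ} {g : ℝ → X}

lemma IsPeriodicChain.mono (hg : IsPeriodicChain φ ε g) {ε' : ℝ} (hε : ε ≤ ε') :
    IsPeriodicChain φ ε' g :=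
  ⟨hg.1, fun t s hs => (hg.2 t s hs).trans_le hε⟩

lemma IsPeriodicChain.comp_of_dist_lt (hg : IsPeriodicChain φ ε g) {σ : X → X} {η η' : ℝ}
    (hσ : ∀ x, dist (σ x) x < η) (hφσ : ∀ s, |s| < 1 → ∀ x, dist (φ s (σ x)) (φ s x) < η') :
    IsPeriodicChain φ (η + ε + η') (σ ∘ g) := by
  obtain ⟨⟨P, hP, hper⟩, hchain⟩ := hg
  refine ⟨⟨P, hP, fun t => congrArg σ (hper t)⟩, fun t s hs => ?_⟩
  calc dist (σ (g (t + s))) (φ s (σ (g t)))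
    _ ≤ dist (σ (g (t + s))) (g (t + s)) + dist (g (t + s)) (φ s (g t))
        + dist (φ s (g t)) (φ s (σ (g t))) := dist_triangle4 ..
    _ < η + ε + η' := by
      rw [dist_comm (φ s (g t))]
      exact add_lt_add (add_lt_add (hσ _) (hchain t s hs)) (hφσ s hs _)

lemma ChainRecurrentPt.exists_mem_chainComponents {x : X} (hx : ChainRecurrentPt φ x) :
    ∃ C ∈ ChainComponents φ, x ∈ C := by
  refine ⟨{y | ChainEquivPt φ x y}, ⟨x, hx, rfl⟩, hx, hx, fun ε hε => ?_⟩
  obtain ⟨g, hg, hg0⟩ := hx ε hε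
  exact ⟨g, hg, ⟨0, hg0⟩, ⟨0, hg0⟩⟩

end Chain

/-- The `T`-periodic curve that follows the orbit of `y` during `[0, T)` and jumps back to `y` at
each multiple of `T`. -/
noncomputable def periodizedOrbit {X : Type*} (φ : ℝ → X → X) {T : ℝ} (hT : 0 < T) (y : X)
    (t : ℝ) : X :=
  φ (toIcoMod hT 0 t) y

section Flow

variable {X : Type*} [MetricSpace X] {Φ : Flow ℝ X} {ε T : ℝ} {y : X}

lemma dist_periodizedOrbit_lt (hT : 1 ≤ T)
    (hclose : ∀ s, |s| ≤ 1 → dist (Φ s (Φ T y)) (Φ s y) < ε) {u : ℝ} (hu : u ∈ Ico (-1) (T + 1)) :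
    dist (periodizedOrbit Φ (zero_lt_one.trans_le hT) y u) (Φ u y) < ε := by
  obtain ⟨hu_ge, hu_lt⟩ := hu
  have hT0 : 0 < T := zero_lt_one.trans_le hT
  have mod_eq {v : ℝ} (hv : 0 ≤ v) (hvT : v < T) : toIcoMod hT0 0 v = v :=
    (toIcoMod_eq_self hT0).2 ⟨hv, by rwa [zero_add]⟩
  unfold periodizedOrbit
  rcases lt_or_ge u 0 with hu0 | hu0
  · have hmod : toIcoMod hT0 0 u = u + T := by
      rw [← toIcoMod_add_right hT0, mod_eq (by linarith) (by linarith)]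
    rw [hmod, Φ.map_add]
    exact hclose u (abs_le.2 ⟨hu_ge, by linarith⟩)
  rcases lt_or_ge u T with huT | huT
  · rw [mod_eq hu0 huT, dist_self]
    exact dist_nonneg.trans_lt (hclose 0 (by simp))
  · have hmod : toIcoMod hT0 0 u = u - T := by
      rw [← toIcoMod_sub hT0, mod_eq (by linarith) (by linarith)]
    rw [hmod, ← sub_add_cancel u T, Φ.map_add, add_sub_cancel_right, dist_comm]
    exact hclose (u - T) (abs_le.2 ⟨by linarith, by linarith⟩)

lemma isPeriodicChain_periodizedOrbit (hT : 1 ≤ T)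
    (hclose : ∀ s, |s| ≤ 1 → dist (Φ s (Φ T y)) (Φ s y) < ε) :
    IsPeriodicChain Φ ε (periodizedOrbit Φ (zero_lt_one.trans_le hT) y) := by
  have hT0 : 0 < T := zero_lt_one.trans_le hT
  have hper : Function.Periodic (periodizedOrbit Φ hT0 y) T :=
    (toIcoMod_periodic hT0 0).comp fun s => Φ s y
  refine ⟨⟨T, hT0, hper⟩, fun t s hs => ?_⟩
  set r := toIcoMod hT0 0 t with hr
  have hrT : r ∈ Ico 0 T := toIcoMod_mem_Ico' hT0 t
  have hmem : s + r ∈ Ico (-1) (T + 1) :=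
    ⟨by linarith [(abs_lt.1 hs).1, hrT.1], by linarith [(abs_lt.1 hs).2, hrT.2]⟩
  have hshift : periodizedOrbit Φ hT0 y (t + s) = periodizedOrbit Φ hT0 y (s + r) := by
    rw [hr, ← self_sub_toIcoDiv_zsmul, ← add_sub_assoc, hper.sub_zsmul_eq, add_comm]
  have hflow : Φ s (periodizedOrbit Φ hT0 y t) = Φ (s + r) y := (Φ.map_add s r y).symm
  rw [hshift, hflow]
  exact dist_periodizedOrbit_lt hT hclose hmem

variable [CompactSpace X] {p : X}

variable (Φ) in
lemma exists_forall_dist_flow_lt (hε : 0 < ε) :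
    ∃ δ > 0, ∀ x y, dist x y < δ → ∀ s, |s| ≤ 1 → dist (Φ s x) (Φ s y) < ε := by
  obtain ⟨δ, hδ, hequi⟩ := Metric.uniformEquicontinuous_iff.1
    (uniformEquicontinuous_of_isCompact Φ.cont' (isCompact_Icc (a := (-1 : ℝ)) (b := 1))) ε hε
  exact ⟨δ, hδ, fun x y hxy s hs => hequi x y hxy ⟨s, abs_le.1 hs⟩⟩

-- A chain starting near `p` is made to pass through `p` by moving its starting point to `p`
-- wherever it occurs.
lemma chainRecurrentPt_of_forall_exists_dist_lt
    (hp : ∀ ε > 0, ∃ g, IsPeriodicChain Φ ε g ∧ dist (g 0) p < ε) : ChainRecurrentPt Φ p := by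
  classical
  intro ε hε
  obtain ⟨δ, hδ, hΦ⟩ := exists_forall_dist_flow_lt Φ (show 0 < ε / 3 by positivity)
  obtain ⟨g, hg, hgp⟩ := hp (min δ (ε / 3)) (by positivity)
  let σ : X → X := Function.update id (g 0) p
  have hσ0 : σ (g 0) = p := Function.update_self ..
  have hσ (x : X) : dist (σ x) x < min δ (ε / 3) := by
    rcases eq_or_ne x (g 0) with rfl | hx
    · rwa [hσ0, dist_comm]
    · simp only [σ, Function.update_of_ne hx, id_eq, dist_self]
      positivity
  have hchain := hg.comp_of_dist_lt (fun x => (hσ x).trans_le (min_le_right _ _))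
    fun s hs x => hΦ _ _ ((hσ x).trans_le (min_le_left _ _)) s hs.le
  exact ⟨σ ∘ g, hchain.mono (by linarith [min_le_right δ (ε / 3)]), hσ0⟩

lemma chainRecurrentPt_of_mem_omegaLimit {x : X} (hp : p ∈ ω⁺ Φ {x}) : ChainRecurrentPt Φ p := by
  refine chainRecurrentPt_of_forall_exists_dist_lt fun ε hε => ?_
  obtain ⟨δ, hδ, hΦ⟩ := exists_forall_dist_flow_lt Φ hε
  have hvisits : ∃ᶠ t in atTop, dist (Φ t x) p < min (δ / 2) ε :=
    ((mem_omegaLimit_singleton_iff_mapClusterPt _ _ _ _).1 hp).frequently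
      (Metric.ball_mem_nhds p (by positivity))
  obtain ⟨a, ha⟩ := hvisits.exists
  obtain ⟨b, hab, hb⟩ := frequently_atTop.1 hvisits (a + 1)
  have hT : 1 ≤ b - a := by linarith
  have hreturn : dist (Φ (b - a) (Φ a x)) (Φ a x) < δ := by
    rw [← Φ.map_add, sub_add_cancel]
    linarith [dist_triangle_right (Φ b x) (Φ a x) p, min_le_left (δ / 2) ε]
  refine ⟨_, isPeriodicChain_periodizedOrbit hT (hΦ _ _ hreturn), ?_⟩
  rw [periodizedOrbit, toIcoMod_apply_left, Φ.map_zero_apply]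
  exact ha.trans_le (min_le_right _ _)

lemma countable_range_of_invariant (hcount : (ChainComponents Φ).Countable)
    (htrans : ∀ C ∈ ChainComponents Φ, ∃ x, C ⊆ closure (Φ.orbit x))
    {Y : Type*} [TopologicalSpace Y] [T2Space Y] {h : X → Y} (hh : Continuous h)
    (hinv : ∀ t x, h (Φ t x) = h x) : (range h).Countable := by
  have hconst : ∀ C ∈ ChainComponents Φ, (h '' C).Subsingleton := by
    rintro C hC _ ⟨a, ha, rfl⟩ _ ⟨b, hb, rfl⟩
    obtain ⟨x, hx⟩ := htrans C hC
    exact (eq_of_mem_closure_orbit hh hinv (hx ha)).trans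
      (eq_of_mem_closure_orbit hh hinv (hx hb)).symm
  refine (hcount.biUnion fun C hC => (hconst C hC).countable).mono ?_
  rintro _ ⟨x, rfl⟩
  obtain ⟨p, hp⟩ := nonempty_omegaLimit atTop Φ {x} (singleton_nonempty x)
  obtain ⟨C, hC, hpC⟩ := (chainRecurrentPt_of_mem_omegaLimit hp).exists_mem_chainComponents
  have hpx : h p = h x :=
    eq_of_mem_closure_orbit hh hinv (omegaLimit_singleton_subset_closure_orbit Φ atTop x hp)
  exact mem_biUnion hC ⟨p, hpC, hpx⟩

end Flow

theorem invariant_function_constant_of_countable_transitive_chain_components_general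
    {X Y : Type*} [MetricSpace X] [CompactSpace X] [PreconnectedSpace X] [MetricSpace Y]
    (Φ : Flow ℝ X) (hcount : (ChainComponents Φ).Countable)
    (htrans : ∀ C ∈ ChainComponents Φ, ∃ x, C ⊆ closure (Φ.orbit x))
    {h : X → Y} (hh : Continuous h) (hinv : ∀ t x, h (Φ t x) = h x) (x y : X) : h x = h y :=
  (countable_range_of_invariant hcount htrans hh hinv).isTotallyDisconnected (range h)
    Subset.rfl (isPreconnected_range hh) (mem_range_self x) (mem_range_self y)

/-- A continuous invariant function of a continuous flow on a compact connected
metric space with countably many chain-components, each topologically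
transitive, is constant. -/
theorem invariant_function_constant_of_countable_transitive_chain_components
    {X : Type*} [MetricSpace X] [CompactSpace X] [ConnectedSpace X]
    (φ : ℝ → X → X)
    (hφc : Continuous fun p : ℝ × X => φ p.1 p.2)
    (hφ0 : ∀ x, φ 0 x = x)
    (hφadd : ∀ s t : ℝ, ∀ x, φ (s + t) x = φ s (φ t x))
    (hcount : (ChainComponents φ).Countable)
    (htrans : ∀ C ∈ ChainComponents φ, ∃ x ∈ C,
      C ⊆ closure {y : X | ∃ t : ℝ, 0 ≤ t ∧ y = φ t x})
    (h : X → ℝ) (hhc : Continuous h) (hinv : ∀ t : ℝ, ∀ x, h (φ t x) = h x) :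
    ∀ x y : X, h x = h y :=
  invariant_function_constant_of_countable_transitive_chain_components_general
    ⟨φ, hφc, hφadd, hφ0⟩ hcount
    (fun C hC => (htrans C hC).imp fun _ hx =>
      hx.2.trans (closure_mono fun _ ⟨t, _, ht⟩ => ⟨t, ht.symm⟩)) hhc hinv
end
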